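/- arXiv:2603.00860 — 4 statements merged into one kernel-verified Lean document; each statement's English description precedes it below -/
import Mathlib

section
/- Let m > 2·C₁·C₃ and take m_ℓ = m smoothing steps on every level. Under Assumptions (A1), (A2) and (A3) listed in the context, the multigrid V-cycle operators B_ℓ satisfy, for every level ℓ ≥ 1 and every λ ∈ V_ℓ, |a_ℓ((Id − B_ℓ A_ℓ)λ, λ)| ≤ δ · a_ℓ(λ, λ), where δ = C₁C₃ / (m − C₁C₃). -/
/-!
Write `E ℓ = 1 - B ℓ * A ℓ`, `R = 1 - S * A` (self-adjoint for the energy form `a`), and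
`w = R ^ m λ`. Since `Ires ℓ ∘ A (ℓ+1) = A ℓ ∘ P ℓ`, the V-cycle recursion gives
`a(E λ, λ) = a(w - I P w, w) + a_ℓ(E_ℓ P w, P w)`,
and `a_ℓ(P w, P w) = a(w, w) - a(w - I P w, w)`. By induction and the regularity assumption,
`|a(E λ, λ)| ≤ (1 + δ) C₁ ‖A w‖² / lmax + δ a(w, w)`; the smoothing assumption bounds
`‖A w‖² / lmax` by `C₃ (a(w, w) - a(R w, R w))`.

The energies `c j = a(R ^ j λ, R ^ j λ)` form a convex sequence, because the second difference at
`u = R ^ j λ` is `a(u - R² u, u - R² u) ≥ 0`. Hence `m (c m - c (m+1)) ≤ c 0 - c m`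
(`smoothing_energy_bound`), and as `δ = (1 + δ) C₁ C₃ / m` the bound closes up to
`δ (c 0 - c m) + δ c m = δ a(λ, λ)`. The induction starts at level `0`, where `E 0 = 0`.
-/

open scoped RealInnerProductSpace

/-- A convex sequence decreases over `m` steps by at least `m` times its next decrement. -/
lemma convex_seq_decrement (c : ℕ → ℝ) (hc : ∀ j, c (j + 1) - c (j + 2) ≤ c j - c (j + 1))
    (m : ℕ) : (m : ℝ) * (c m - c (m + 1)) ≤ c 0 - c m := by
  induction m with
  | zero => simp
  | succ k ih =>
    have h := mul_le_mul_of_nonneg_left (hc k) (by positivity : (0 : ℝ) ≤ (k : ℝ) + 1)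
    push_cast
    linarith

lemma energy_adjoint_smoother {E : Type*} [NormedAddCommGroup E] [InnerProductSpace ℝ E]
    (A S : Module.End ℝ E)
    (hA : ∀ u v : E, ⟪A u, v⟫ = ⟪u, A v⟫) (hS : ∀ u v : E, ⟪S u, v⟫ = ⟪u, S v⟫) (u v : E) :
    ⟪A ((1 - S * A) u), v⟫ = ⟪A u, (1 - S * A) v⟫ := by
  simp only [LinearMap.sub_apply, Module.End.one_apply, Module.End.mul_apply, map_sub,
    inner_sub_left, inner_sub_right]
  rw [hA (S (A u)) v, hS]

lemma energy_adjoint_pow {E : Type*} [NormedAddCommGroup E] [InnerProductSpace ℝ E]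
    (A R : Module.End ℝ E) (hR : ∀ u v : E, ⟪A (R u), v⟫ = ⟪A u, R v⟫) (k : ℕ) (u v : E) :
    ⟪A ((R ^ k) u), v⟫ = ⟪A u, (R ^ k) v⟫ := by
  induction k generalizing u with
  | zero => simp
  | succ k ih =>
    rw [pow_succ, Module.End.mul_apply, ih, hR, ← Module.End.mul_apply, ← pow_succ', pow_succ]

/-- The smoothing property: for an energy-self-adjoint `R`, the energy lost in the step after
`m` smoothing steps is at most the average loss over those `m` steps. -/
lemma smoothing_energy_bound {E : Type*} [NormedAddCommGroup E] [InnerProductSpace ℝ E]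
    (A R : Module.End ℝ E) (hA0 : ∀ u : E, 0 ≤ ⟪A u, u⟫)
    (hR : ∀ u v : E, ⟪A (R u), v⟫ = ⟪A u, R v⟫) (m : ℕ) (x : E) :
    (m : ℝ) * ⟪A ((1 - R ^ 2 : Module.End ℝ E) ((R ^ m) x)), (R ^ m) x⟫ ≤
      ⟪A x, x⟫ - ⟪A ((R ^ m) x), (R ^ m) x⟫ := by
  have h := convex_seq_decrement (fun j => ⟪A ((R ^ j) x), (R ^ j) x⟫) (fun j => by
    have h0 := hA0 ((R ^ j) x - R (R ((R ^ j) x)))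
    simp only [pow_succ', Module.End.mul_apply]
    simp only [map_sub, inner_sub_left, inner_sub_right] at h0
    have h1 := hR (R ((R ^ j) x)) ((R ^ j) x)
    have h2 := hR ((R ^ j) x) (R ((R ^ j) x))
    linarith) m
  have h3 := hR (R ((R ^ m) x)) ((R ^ m) x)
  simp only [pow_zero, Module.End.one_apply, pow_succ' R m, Module.End.mul_apply] at h
  simp only [pow_two, LinearMap.sub_apply, Module.End.one_apply, Module.End.mul_apply, map_sub,
    inner_sub_left]
  rw [h3]
  exact h

/-- uniform convergence of the multigrid V-cycle with a fixed number
`m > 2 C₁ C₃` of smoothing steps per level, under the regularity assumption (A1),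
the boundedness assumption (A2) and the smoothing hypothesis (A3).
Levels are indexed by `ℕ`, with `Iprol ℓ : V ℓ → V (ℓ+1)` the prolongation from
level `ℓ` to level `ℓ+1` (so the paper's `I_ℓ` is `Iprol (ℓ-1)`), `Ires ℓ` its
adjoint, `P ℓ` the Ritz-type projection, and the energy form at level `ℓ` given by
`a_ℓ(u, v) = ⟪A ℓ u, v⟫`. -/
theorem multigrid_vcycle_contraction
    (L : ℕ) (V : ℕ → Type*)
    [∀ ℓ, NormedAddCommGroup (V ℓ)] [∀ ℓ, InnerProductSpace ℝ (V ℓ)]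
    [∀ ℓ, FiniteDimensional ℝ (V ℓ)] [∀ ℓ, Nontrivial (V ℓ)]
    (A S K B : ∀ ℓ, Module.End ℝ (V ℓ))
    (Iprol : ∀ ℓ, V ℓ →ₗ[ℝ] V (ℓ + 1))
    (Ires : ∀ ℓ, V (ℓ + 1) →ₗ[ℝ] V ℓ)
    (P : ∀ ℓ, V (ℓ + 1) →ₗ[ℝ] V ℓ)
    (lmax : ℕ → ℝ)
    (C₁ C₃ : ℝ) (hC₁ : 0 < C₁) (hC₃ : 0 < C₃)
    (C₂ : ℝ) (hC₂ : 0 < C₂)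
    (m : ℕ) (hm : 2 * C₁ * C₃ < (m : ℝ))
    -- each `A ℓ` is self-adjoint and positive definite
    (hA_sym : ∀ ℓ, ℓ ≤ L → ∀ u v : V ℓ, ⟪A ℓ u, v⟫ = ⟪u, A ℓ v⟫)
    (hA_pd : ∀ ℓ, ℓ ≤ L → ∀ u : V ℓ, u ≠ 0 → 0 < ⟪A ℓ u, u⟫)
    -- `lmax ℓ` is the largest eigenvalue of `A ℓ`
    (hlmax_eig : ∀ ℓ, ℓ ≤ L → Module.End.HasEigenvalue (A ℓ) (lmax ℓ))
    (hlmax_max : ∀ ℓ, ℓ ≤ L → ∀ μ : ℝ, Module.End.HasEigenvalue (A ℓ) μ → μ ≤ lmax ℓ)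
    -- the smoothers are self-adjoint
    (hS_sym : ∀ ℓ, 1 ≤ ℓ → ℓ ≤ L → ∀ u v : V ℓ, ⟪S ℓ u, v⟫ = ⟪u, S ℓ v⟫)
    -- `Ires ℓ` is the adjoint of the prolongation `Iprol ℓ`
    (hIres : ∀ ℓ, ℓ + 1 ≤ L → ∀ (v : V (ℓ + 1)) (w : V ℓ), ⟪Ires ℓ v, w⟫ = ⟪v, Iprol ℓ w⟫)
    -- `P ℓ` is defined by `a_ℓ(P ℓ λ, μ) = a_{ℓ+1}(λ, Iprol ℓ μ)`
    (hP : ∀ ℓ, ℓ + 1 ≤ L → ∀ (lam : V (ℓ + 1)) (μ : V ℓ),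
      ⟪A ℓ (P ℓ lam), μ⟫ = ⟪A (ℓ + 1) lam, Iprol ℓ μ⟫)
    -- the symmetrized smoother: `K ℓ ∘ A ℓ = Id - (Id - S ℓ A ℓ)²`
    (hK : ∀ ℓ, 1 ≤ ℓ → ℓ ≤ L → K ℓ * A ℓ = 1 - (1 - S ℓ * A ℓ) ^ 2)
    -- the V-cycle recursion: `B 0 = (A 0)⁻¹` and
    -- `Id - B (ℓ+1) A (ℓ+1) = (Id - S A)^m (Id - Iprol ∘ B ℓ ∘ Ires ∘ A) (Id - S A)^m`
    (hB0 : B 0 * A 0 = 1) (hB0' : A 0 * B 0 = 1)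
    (hB : ∀ ℓ, ℓ + 1 ≤ L →
      (1 : Module.End ℝ (V (ℓ + 1))) - B (ℓ + 1) * A (ℓ + 1) =
        (1 - S (ℓ + 1) * A (ℓ + 1)) ^ m *
          ((1 : Module.End ℝ (V (ℓ + 1))) -
            (Iprol ℓ ∘ₗ B ℓ ∘ₗ Ires ℓ ∘ₗ A (ℓ + 1) : Module.End ℝ (V (ℓ + 1)))) *
        (1 - S (ℓ + 1) * A (ℓ + 1)) ^ m)
    -- Assumption (A1): regularity
    (hA1 : ∀ ℓ, ℓ + 1 ≤ L → ∀ lam : V (ℓ + 1),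
      |⟪A (ℓ + 1) (lam - Iprol ℓ (P ℓ lam)), lam⟫| ≤
        C₁ * ‖A (ℓ + 1) lam‖ ^ 2 / lmax (ℓ + 1))
    -- Assumption (A2): boundedness of `Id - Iprol ∘ P`
    (hA2 : ∀ ℓ, ℓ + 1 ≤ L → ∀ lam : V (ℓ + 1),
      Real.sqrt ⟪A (ℓ + 1) (lam - Iprol ℓ (P ℓ lam)), lam - Iprol ℓ (P ℓ lam)⟫ ≤
        C₂ * Real.sqrt ⟪A (ℓ + 1) lam, lam⟫)
    -- Assumption (A3): smoothing hypothesis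
    (hA3_spec : ∀ ℓ, 1 ≤ ℓ → ℓ ≤ L →
      ∀ μ : ℝ, Module.End.HasEigenvalue ((1 : Module.End ℝ (V ℓ)) - S ℓ * A ℓ) μ → 0 < μ)
    (hA3 : ∀ ℓ, 1 ≤ ℓ → ℓ ≤ L → ∀ lam : V ℓ,
      ⟪lam, lam⟫ / lmax ℓ ≤ C₃ * ⟪K ℓ lam, lam⟫) :
    ∀ ℓ, 1 ≤ ℓ → ℓ ≤ L → ∀ lam : V ℓ,
      |⟪A ℓ (lam - B ℓ (A ℓ lam)), lam⟫| ≤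
        (C₁ * C₃ / ((m : ℝ) - C₁ * C₃)) * ⟪A ℓ lam, lam⟫ := by
  have hCm : 0 < (m : ℝ) - C₁ * C₃ := by nlinarith [mul_pos hC₁ hC₃]
  set δ : ℝ := C₁ * C₃ / ((m : ℝ) - C₁ * C₃) with hδ
  have hδ0 : 0 ≤ δ := by positivity
  -- the fixed-point equation that determines `δ`
  have hδm : (1 + δ) * (C₁ * C₃) = δ * m := by
    rw [hδ]
    field_simp
    ring
  have hnn : ∀ ℓ, ℓ ≤ L → ∀ u : V ℓ, 0 ≤ ⟪A ℓ u, u⟫ := by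
    intro ℓ hℓ u
    by_cases hu : u = 0
    · simp [hu]
    · exact (hA_pd ℓ hℓ u hu).le
  have main : ∀ ℓ, ℓ ≤ L → ∀ lam : V ℓ,
      |⟪A ℓ (lam - B ℓ (A ℓ lam)), lam⟫| ≤ δ * ⟪A ℓ lam, lam⟫ := by
    intro ℓ
    induction ℓ with
    | zero =>
      intro h lam
      have hE : B 0 (A 0 lam) = lam := by
        rw [← Module.End.mul_apply, hB0, Module.End.one_apply]
      rw [hE, sub_self, map_zero, inner_zero_left, abs_zero]
      exact mul_nonneg hδ0 (hnn 0 h lam)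
    | succ ℓ ih =>
      intro h lam
      have hsym := hA_sym (ℓ + 1) h
      have hR := energy_adjoint_smoother (A (ℓ + 1)) (S (ℓ + 1)) hsym
        (hS_sym (ℓ + 1) (by omega) h)
      have hBl := LinearMap.congr_fun (hB ℓ h) lam
      have hKl := hK (ℓ + 1) (by omega) h
      set R := (1 : Module.End ℝ (V (ℓ + 1))) - S (ℓ + 1) * A (ℓ + 1) with hRdef
      have hsm := smoothing_energy_bound (A (ℓ + 1)) R (hnn (ℓ + 1) h) hR m lam
      simp only [LinearMap.sub_apply (1 : Module.End ℝ (V (ℓ + 1))), Module.End.one_apply,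
        Module.End.mul_apply, LinearMap.comp_apply] at hBl
      set w := (R ^ m) lam with hw
      have hIA : Ires ℓ (A (ℓ + 1) w) = A ℓ (P ℓ w) := by
        refine ext_inner_right ℝ fun v => ?_
        rw [hIres ℓ h, hP ℓ h]
      rw [hIA] at hBl
      have hmid : ⟪A (ℓ + 1) (Iprol ℓ (P ℓ w - B ℓ (A ℓ (P ℓ w)))), w⟫ =
          ⟪A ℓ (P ℓ w - B ℓ (A ℓ (P ℓ w))), P ℓ w⟫ := by
        rw [hsym, real_inner_comm, ← hP ℓ h, hA_sym ℓ (by omega), real_inner_comm]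
      have hsplit : ⟪A (ℓ + 1) (lam - B (ℓ + 1) (A (ℓ + 1) lam)), lam⟫ =
          ⟪A (ℓ + 1) (w - Iprol ℓ (P ℓ w)), w⟫ +
            ⟪A ℓ (P ℓ w - B ℓ (A ℓ (P ℓ w))), P ℓ w⟫ := by
        rw [hBl, energy_adjoint_pow (A (ℓ + 1)) R hR, ← hw, ← hmid, ← inner_add_left, ← map_add,
          map_sub (Iprol ℓ), sub_add_sub_cancel]
      have hPw : ⟪A ℓ (P ℓ w), P ℓ w⟫ =
          ⟪A (ℓ + 1) w, w⟫ - ⟪A (ℓ + 1) (w - Iprol ℓ (P ℓ w)), w⟫ := by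
        rw [hP ℓ h, map_sub, inner_sub_left, hsym (Iprol ℓ (P ℓ w)) w,
          real_inner_comm (A (ℓ + 1) w)]
        ring
      have h1 := hA1 ℓ h w
      have h3 := hA3 (ℓ + 1) (by omega) h (A (ℓ + 1) w)
      have hKw : ⟪K (ℓ + 1) (A (ℓ + 1) w), A (ℓ + 1) w⟫ =
          ⟪A (ℓ + 1) ((1 - R ^ 2 : Module.End ℝ (V (ℓ + 1))) w), w⟫ := by
        rw [← hKl, Module.End.mul_apply, hsym (K (ℓ + 1) (A (ℓ + 1) w))]
      rw [hKw, real_inner_self_eq_norm_sq] at h3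
      set D := ⟪A (ℓ + 1) ((1 - R ^ 2 : Module.End ℝ (V (ℓ + 1))) w), w⟫ with hD
      set X := ⟪A (ℓ + 1) (w - Iprol ℓ (P ℓ w)), w⟫ with hX
      have hXD : |X| ≤ C₁ * C₃ * D := by
        calc |X| ≤ C₁ * (‖A (ℓ + 1) w‖ ^ 2 / lmax (ℓ + 1)) := by rw [← mul_div_assoc]; exact h1
          _ ≤ C₁ * (C₃ * D) := mul_le_mul_of_nonneg_left h3 hC₁.le
          _ = C₁ * C₃ * D := by ring
      have hih := ih (by omega) (P ℓ w)
      rw [hPw] at hih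
      rw [hsplit]
      calc |X + ⟪A ℓ (P ℓ w - B ℓ (A ℓ (P ℓ w))), P ℓ w⟫|
          ≤ |X| + δ * (⟪A (ℓ + 1) w, w⟫ - X) := (abs_add_le _ _).trans (by gcongr)
        _ ≤ |X| + δ * (⟪A (ℓ + 1) w, w⟫ + |X|) := by
            gcongr
            linarith [neg_abs_le X]
        _ = (1 + δ) * |X| + δ * ⟪A (ℓ + 1) w, w⟫ := by ring
        _ ≤ (1 + δ) * (C₁ * C₃ * D) + δ * ⟪A (ℓ + 1) w, w⟫ := by gcongr
        _ = δ * (m * D) + δ * ⟪A (ℓ + 1) w, w⟫ := by linear_combination D * hδm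
        _ ≤ δ * (⟪A (ℓ + 1) lam, lam⟫ - ⟪A (ℓ + 1) w, w⟫) + δ * ⟪A (ℓ + 1) w, w⟫ := by gcongr
        _ = δ * ⟪A (ℓ + 1) lam, lam⟫ := by ring
  exact fun ℓ _ hℓ => main ℓ hℓ
end

section
/- Let V be a finite-dimensional real inner product space, a a symmetric positive-definite bilinear form on V with associated operator A (⟨A u, v⟩ = a(u,v)) and largest eigenvalue λmax(A), and let N₁,…,N_n be subspaces of V with N₁ + ⋯ + N_n = V. Let S̃ := Σᵢ ιᵢ Aᵢ⁻¹ πᵢ be the associated parallel subspace correction (additive Schwarz) operator, let ω > 0, S := ω S̃, D := S̃ A, and K := (Id − (Id − S A)²) A⁻¹. Assume: (1) a(D λ, D λ) ≤ c₀ a(D λ, λ) for all λ ∈ V; (2) there are constants c₁, c₂, h > 0 with h⁻² ≤ c₂ λmax(A) such that every λ ∈ V admits a decomposition λ = Σᵢ λᵢ with λᵢ ∈ Nᵢ and Σᵢ a(λᵢ, λᵢ) ≤ c₁ h⁻² ⟨λ, λ⟩. Then, if 0 < ω < c₀⁻¹: (i) every eigenvalue of Id − S A is positive, and (ii) ⟨λ,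 λ⟩ / λmax(A) ≤ (c₁ c₂ / ω) ⟨K λ, λ⟩ for all λ ∈ V; that is, the smoother S fulfils the smoothing hypothesis with C₃ = c₁ c₂ / ω. -/
/-!
The eigenvalue claim is immediate from the interaction bound: if `(Id - S A) v = μ v`, then
`D v = d v` with `ω d = 1 - μ`, and `d² a(v, v) ≤ c₀ d a(v, v)` forces `d ≤ c₀`, so `1 - μ < 1`.

For the smoothing bound, `K λ = 2 S λ - S A S λ` (using that `A` is onto), and `S̃` is symmetric,
so `⟨K λ, λ⟩ = 2 ω ⟨S̃ λ, λ⟩ - ω² a(S̃ λ, S̃ λ) ≥ ω ⟨S̃ λ, λ⟩` by the interaction bound.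
Since `⟨S̃ λ, λ⟩ = ∑ a(Qᵢ λ, Qᵢ λ)` and `⟨λ, λ⟩ = ∑ a(Qᵢ λ, λᵢ)`, Young's inequality with
parameter `M = c₁ h⁻²` and the stable decomposition give `⟨λ, λ⟩ ≤ M ⟨S̃ λ, λ⟩`.
-/

open scoped RealInnerProductSpace

/-- the parallel subspace correction (additive Schwarz) smoother
`S = ω S̃` fulfils the smoothing hypothesis with `C₃ = c₁ c₂ / ω`, provided
`0 < ω < c₀⁻¹`, the interaction bound `a(Dλ, Dλ) ≤ c₀ a(Dλ, λ)` with `D = S̃ A`,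
and a stable decomposition with constant `c₁ h⁻²`, `h⁻² ≤ c₂ λmax(A)`.
Each summand `Qᵢ = ιᵢ Aᵢ⁻¹ πᵢ` of `S̃` is characterized by `Qᵢ x ∈ Nᵢ` and
`a(Qᵢ x, v) = ⟨x, v⟩` for `v ∈ Nᵢ`; the symmetrized smoother `K` is characterized
by `K A = Id - (Id - S A)²`. -/
theorem patch_smoother_smoothing_hypothesis
    {V : Type*} [NormedAddCommGroup V] [InnerProductSpace ℝ V] [FiniteDimensional ℝ V]
    {n : ℕ}
    (a : V →ₗ[ℝ] V →ₗ[ℝ] ℝ)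
    (ha_symm : ∀ u v : V, a u v = a v u)
    (ha_pd : ∀ u : V, u ≠ 0 → 0 < a u u)
    (A : Module.End ℝ V)
    (hA : ∀ u v : V, ⟪A u, v⟫ = a u v)
    (lmax : ℝ)
    (hlmax_eig : Module.End.HasEigenvalue A lmax)
    (hlmax_max : ∀ μ : ℝ, Module.End.HasEigenvalue A μ → μ ≤ lmax)
    (N : Fin n → Submodule ℝ V)
    (hN : (⨆ i, N i) = ⊤)
    (Q : Fin n → Module.End ℝ V)
    (hQmem : ∀ i (x : V), Q i x ∈ N i)
    (hQ : ∀ i (x v : V), v ∈ N i → a (Q i x) v = ⟪x, v⟫)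
    (St : Module.End ℝ V) (hSt : St = ∑ i, Q i)
    (ω : ℝ) (hω0 : 0 < ω)
    (S : Module.End ℝ V) (hS : S = ω • St)
    (K : Module.End ℝ V) (hK : K * A = 1 - (1 - S * A) ^ 2)
    (c₀ : ℝ) (hc₀ : 0 < c₀)
    (h1 : ∀ lam : V, a (St (A lam)) (St (A lam)) ≤ c₀ * a (St (A lam)) lam)
    (c₁ c₂ h : ℝ) (hc₁ : 0 < c₁) (hc₂ : 0 < c₂) (hh : 0 < h)
    (hmesh : (h ^ 2)⁻¹ ≤ c₂ * lmax)
    (hdecomp : ∀ lam : V, ∃ y : Fin n → V, (∀ i, y i ∈ N i) ∧ (∑ i, y i) = lam ∧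
      (∑ i, a (y i) (y i)) ≤ c₁ * (h ^ 2)⁻¹ * ⟪lam, lam⟫)
    (hωc : ω < c₀⁻¹) :
    (∀ μ : ℝ, Module.End.HasEigenvalue (1 - S * A) μ → 0 < μ) ∧
    (∀ lam : V, ⟪lam, lam⟫ / lmax ≤ (c₁ * c₂ / ω) * ⟪K lam, lam⟫) := by
  have ha_nonneg : ∀ u, 0 ≤ a u u := fun u => by
    by_cases hu : u = 0
    · simp [hu]
    · exact (ha_pd u hu).le
  have hωc0 : ω * c₀ < 1 := by
    have := mul_lt_mul_of_pos_right hωc hc₀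
    rwa [inv_mul_cancel₀ hc₀.ne'] at this
  refine ⟨?_, ?_⟩
  · intro μ hμ
    obtain ⟨v, hv⟩ := hμ.exists_hasEigenvector
    have hpos := ha_pd v hv.2
    have hev : v - ω • St (A v) = μ • v := by
      have := hv.apply_eq_smul
      simpa [hS] using this
    have hd : St (A v) = ((1 - μ) / ω) • v := by
      have h2 : ω • St (A v) = (1 - μ) • v := by
        rw [sub_smul, one_smul, ← hev]; abel
      rw [div_eq_inv_mul, mul_smul, ← h2, smul_smul, inv_mul_cancel₀ hω0.ne', one_smul]
    have hb := h1 v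
    rw [hd] at hb
    simp only [map_smul, LinearMap.smul_apply, smul_eq_mul] at hb
    set d := (1 - μ) / ω with hd_def
    have hdω : ω * d = 1 - μ := by rw [hd_def]; field_simp
    have hdle : d ≤ c₀ := by
      by_contra hcon
      push Not at hcon
      have : 0 < (d * (d - c₀)) * a v v :=
        mul_pos (mul_pos (hc₀.trans hcon) (sub_pos.2 hcon)) hpos
      nlinarith
    nlinarith [mul_le_mul_of_nonneg_left hdle hω0.le]
  · intro lam
    have hQinner : ∀ i (x z : V), ⟪Q i x, z⟫ = a (Q i x) (Q i z) := fun i x z => by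
      rw [real_inner_comm, ← hQ i z _ (hQmem i x), ha_symm]
    have hStinner : ∀ x z : V, ⟪St x, z⟫ = ∑ i, a (Q i x) (Q i z) := fun x z => by
      simp only [hSt, LinearMap.sum_apply, sum_inner, hQinner]
    have hSt_symm : ∀ x z : V, ⟪St x, z⟫ = ⟪x, St z⟫ := fun x z => by
      rw [real_inner_comm (St z) x, hStinner, hStinner]
      exact Finset.sum_congr rfl fun i _ => ha_symm _ _
    have hA_inj : Function.Injective A := by
      refine (injective_iff_map_eq_zero A).2 fun u hu => ?_
      by_contra hne
      have := ha_pd u hne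
      rw [← hA, hu, inner_zero_left] at this
      exact lt_irrefl _ this
    obtain ⟨w, hw⟩ := LinearMap.surjective_of_injective hA_inj lam
    have hKlam : K lam = (2 * ω) • St lam - (ω ^ 2) • St (A (St lam)) := by
      have := LinearMap.congr_fun hK w
      simp only [hS, pow_two, Module.End.mul_apply, LinearMap.sub_apply, Module.End.one_apply,
        LinearMap.smul_apply, map_sub, map_smul, hw] at this
      rw [this]
      module
    have hTnonneg : 0 ≤ ⟪St lam, lam⟫ := by
      rw [hStinner]
      exact Finset.sum_nonneg fun i _ => ha_nonneg _
    have hinter : a (St lam) (St lam) ≤ c₀ * ⟪St lam, lam⟫ := by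
      have := h1 w
      rwa [hw, ha_symm (St lam) w, ← hA w, hw, real_inner_comm] at this
    have hKT : ω * ⟪St lam, lam⟫ ≤ ⟪K lam, lam⟫ := by
      rw [hKlam, inner_sub_left, real_inner_smul_left, real_inner_smul_left,
        hSt_symm (A (St lam)) lam, hA]
      have e1 := mul_le_mul_of_nonneg_left hinter (sq_nonneg ω)
      have e2 := mul_le_mul_of_nonneg_right hωc0.le (mul_nonneg hω0.le hTnonneg)
      nlinarith
    obtain ⟨y, hyN, hysum, hy⟩ := hdecomp lam
    have hh2 : 0 < (h ^ 2)⁻¹ := by positivity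
    have hlpos : 0 < lmax := pos_of_mul_pos_right (hh2.trans_le hmesh) hc₂.le
    set M := c₁ * (h ^ 2)⁻¹ with hM_def
    have hM : 0 < M := mul_pos hc₁ hh2
    have hL : ⟪lam, lam⟫ = ∑ i, a (Q i lam) (y i) := by
      calc ⟪lam, lam⟫ = ⟪lam, ∑ i, y i⟫ := by rw [hysum]
        _ = ∑ i, a (Q i lam) (y i) := by
          rw [inner_sum]
          exact Finset.sum_congr rfl fun i _ => (hQ i lam _ (hyN i)).symm
    -- Young's inequality, from expanding `0 ≤ a(M p - q, M p - q)`.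
    have hyoung : ∀ p q : V, 2 * M * a p q ≤ M ^ 2 * a p p + a q q := fun p q => by
      have := ha_nonneg (M • p - q)
      simp only [map_sub, map_smul, LinearMap.sub_apply, LinearMap.smul_apply, smul_eq_mul,
        ha_symm q p] at this
      nlinarith
    have hLT : ⟪lam, lam⟫ ≤ M * ⟪St lam, lam⟫ := by
      have hsum := Finset.sum_le_sum fun i (_ : i ∈ Finset.univ) => hyoung (Q i lam) (y i)
      rw [Finset.sum_add_distrib, ← Finset.mul_sum, ← Finset.mul_sum, ← hL, ← hStinner] at hsum
      refine le_of_mul_le_mul_left ?_ hM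
      nlinarith
    have hMl : M ≤ c₁ * c₂ * lmax := by
      rw [hM_def, mul_assoc]
      exact mul_le_mul_of_nonneg_left hmesh hc₁.le
    calc ⟪lam, lam⟫ / lmax ≤ c₁ * c₂ * ⟪St lam, lam⟫ := by
          rw [div_le_iff₀ hlpos]
          nlinarith [mul_le_mul_of_nonneg_right hMl hTnonneg]
      _ = (c₁ * c₂ / ω) * (ω * ⟪St lam, lam⟫) := by field_simp
      _ ≤ (c₁ * c₂ / ω) * ⟪K lam, lam⟫ :=
          mul_le_mul_of_nonneg_left hKT (by positivity)
end

section
/- Let V be a finite-dimensional real inner product space, a a symmetric positive-definite bilinear form on V, N₁,…,N_n subspaces of V with N₁ + ⋯ + N_n = V, and S̃ := Σᵢ ιᵢ Aᵢ⁻¹ πᵢ the associated parallel subspace correction (additive Schwarz) operator. Suppose there is a constant c > 0 such that every λ ∈ V admits a decomposition λ = Σᵢ λᵢ with λᵢ ∈ Nᵢ and Σᵢ a(λᵢ, λᵢ) ≤ c ⟨λ, λ⟩. Then ⟨S̃ λ, λ⟩ ≥ c⁻¹ ⟨λ, λ⟩ for all λ ∈ V. -/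
/-!
With `λ = Σ yᵢ` a stable decomposition, positivity of `a` gives
`0 ≤ Σ a(Qᵢ λ - c⁻¹ yᵢ, Qᵢ λ - c⁻¹ yᵢ)`. By the defining property of `Qᵢ`, the right-hand side equals
`⟨S̃ λ, λ⟩ - 2 c⁻¹ ⟨λ, λ⟩ + c⁻² Σ a(yᵢ, yᵢ)`, and stability bounds the last term by `c⁻¹ ⟨λ, λ⟩`.
The factor `c⁻¹` is the one that optimizes the resulting bound; this replaces the usual pair of
Cauchy–Schwarz inequalities.
-/

open scoped RealInnerProductSpace

/-- a stable decomposition with constant `c` yields the lower bound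
`⟨S̃ λ, λ⟩ ≥ c⁻¹ ⟨λ, λ⟩` for the parallel subspace correction operator
`S̃ = Σᵢ ιᵢ Aᵢ⁻¹ πᵢ`.  Each summand `Qᵢ = ιᵢ Aᵢ⁻¹ πᵢ` is characterized by the
properties `Qᵢ x ∈ Nᵢ` and `a(Qᵢ x, v) = ⟨x, v⟩` for all `v ∈ Nᵢ`. -/
theorem stable_decomposition_lower_bound
    {V : Type*} [NormedAddCommGroup V] [InnerProductSpace ℝ V] [FiniteDimensional ℝ V]
    {n : ℕ}
    (a : V →ₗ[ℝ] V →ₗ[ℝ] ℝ)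
    (ha_symm : ∀ u v : V, a u v = a v u)
    (ha_pd : ∀ u : V, u ≠ 0 → 0 < a u u)
    (N : Fin n → Submodule ℝ V)
    (hN : (⨆ i, N i) = ⊤)
    (Q : Fin n → Module.End ℝ V)
    (hQmem : ∀ i (x : V), Q i x ∈ N i)
    (hQ : ∀ i (x v : V), v ∈ N i → a (Q i x) v = ⟪x, v⟫)
    (St : Module.End ℝ V) (hSt : St = ∑ i, Q i)
    (c : ℝ) (hc : 0 < c)
    (hdecomp : ∀ lam : V, ∃ y : Fin n → V, (∀ i, y i ∈ N i) ∧ (∑ i, y i) = lam ∧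
      (∑ i, a (y i) (y i)) ≤ c * ⟪lam, lam⟫) :
    ∀ lam : V, c⁻¹ * ⟪lam, lam⟫ ≤ ⟪St lam, lam⟫ := by
  intro lam
  obtain ⟨y, hy, hsum, hle⟩ := hdecomp lam
  have hnonneg : ∀ u : V, 0 ≤ a u u := fun u => by
    rcases eq_or_ne u 0 with rfl | hu
    · simp
    · exact (ha_pd u hu).le
  have hexpand : ∀ i, 0 ≤ ⟪lam, Q i lam⟫ - 2 * c⁻¹ * ⟪lam, y i⟫
      + c⁻¹ * c⁻¹ * a (y i) (y i) := fun i => by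
    have h := hnonneg (Q i lam - c⁻¹ • y i)
    simp only [map_sub, map_smul, LinearMap.sub_apply, LinearMap.smul_apply, smul_eq_mul] at h
    rw [ha_symm (y i) (Q i lam), hQ i lam _ (hy i), hQ i lam _ (hQmem i lam)] at h
    linarith
  have htotal := Finset.sum_nonneg fun i (_ : i ∈ Finset.univ) => hexpand i
  rw [Finset.sum_add_distrib, Finset.sum_sub_distrib, ← Finset.mul_sum, ← Finset.mul_sum,
    ← inner_sum, ← inner_sum, hsum] at htotal
  have hS : ⟪St lam, lam⟫ = ⟪lam, ∑ i, Q i lam⟫ := by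
    rw [hSt, LinearMap.sum_apply, real_inner_comm]
  have hbound : c⁻¹ * c⁻¹ * ∑ i, a (y i) (y i) ≤ c⁻¹ * ⟪lam, lam⟫ := by
    calc c⁻¹ * c⁻¹ * ∑ i, a (y i) (y i) ≤ c⁻¹ * c⁻¹ * (c * ⟪lam, lam⟫) := by gcongr
      _ = c⁻¹ * ⟪lam, lam⟫ := by field_simp
  rw [hS]
  linarith
end

section
/- Let V be a finite-dimensional real inner product space, a a symmetric positive-definite bilinear form on V, N₁,…,N_n subspaces of V with N₁ + ⋯ + N_n = V, and S̃ := Σᵢ ιᵢ Aᵢ⁻¹ πᵢ the associated parallel subspace correction (additive Schwarz) operator (which is invertible). Then for every λ ∈ V, ⟨S̃⁻¹ λ, λ⟩ = min { Σᵢ a(λᵢ, λᵢ) : λᵢ ∈ Nᵢ for each i and Σᵢ λᵢ = λ }; i.e., the quadratic form of S̃⁻¹ equals the infimum of the summed energies over all subspace decompositions of λ, and this infimum is attained. -/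
/-!
The operator `S̃ = ∑ᵢ Qᵢ` satisfies `⟨x, S̃ x⟩ = ∑ᵢ a(Qᵢ x, Qᵢ x)`. If `S̃ x = 0`, every `Qᵢ x`
therefore vanishes, so `x` is orthogonal to every `Nᵢ`, hence to `V`; thus `S̃` is injective and,
in finite dimension, invertible.

Put `μ = S̃⁻¹ λ`. The decomposition `λ = ∑ᵢ Qᵢ μ` has energy `⟨μ, λ⟩`. For any other decomposition
`λ = ∑ᵢ yᵢ`, the relation `a(Qᵢ μ, yᵢ) = ⟨μ, yᵢ⟩` lets one complete the square:
`0 ≤ ∑ᵢ a(yᵢ - Qᵢ μ, yᵢ - Qᵢ μ) = ∑ᵢ a(yᵢ, yᵢ) - ⟨μ, λ⟩`.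
-/

open scoped RealInnerProductSpace

/-- the parallel subspace correction operator `S̃ = Σᵢ ιᵢ Aᵢ⁻¹ πᵢ` is
invertible, and the quadratic form of its inverse equals the (attained) infimum of
the summed energies over all subspace decompositions of `λ`.  Each summand
`Qᵢ = ιᵢ Aᵢ⁻¹ πᵢ` is characterized by `Qᵢ x ∈ Nᵢ` and `a(Qᵢ x, v) = ⟨x, v⟩` for
`v ∈ Nᵢ`. -/
theorem subspace_correction_inverse_identity
    {V : Type*} [NormedAddCommGroup V] [InnerProductSpace ℝ V] [FiniteDimensional ℝ V]
    {n : ℕ}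
    (a : V →ₗ[ℝ] V →ₗ[ℝ] ℝ)
    (ha_symm : ∀ u v : V, a u v = a v u)
    (ha_pd : ∀ u : V, u ≠ 0 → 0 < a u u)
    (N : Fin n → Submodule ℝ V)
    (hN : (⨆ i, N i) = ⊤)
    (Q : Fin n → Module.End ℝ V)
    (hQmem : ∀ i (x : V), Q i x ∈ N i)
    (hQ : ∀ i (x v : V), v ∈ N i → a (Q i x) v = ⟪x, v⟫)
    (St : Module.End ℝ V) (hSt : St = ∑ i, Q i) :
    ∃ Tinv : Module.End ℝ V, Tinv * St = 1 ∧ St * Tinv = 1 ∧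
      ∀ lam : V,
        IsLeast {s : ℝ | ∃ y : Fin n → V, (∀ i, y i ∈ N i) ∧ (∑ i, y i) = lam ∧
          s = ∑ i, a (y i) (y i)} ⟪Tinv lam, lam⟫ := by
  have ha_nonneg : ∀ u, 0 ≤ a u u := fun u => by
    by_cases hu : u = 0
    · simp [hu]
    · exact (ha_pd u hu).le
  have energy : ∀ x, ∑ i, a (Q i x) (Q i x) = ⟪x, St x⟫ := fun x => by
    rw [hSt, LinearMap.sum_apply, inner_sum]
    exact Finset.sum_congr rfl fun i _ => hQ i x _ (hQmem i x)
  have inj : Function.Injective St := by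
    rw [← LinearMap.ker_eq_bot, LinearMap.ker_eq_bot']
    intro x hx
    have hsum : ∑ i, a (Q i x) (Q i x) = 0 := by rw [energy, hx, inner_zero_right]
    rw [Finset.sum_eq_zero_iff_of_nonneg fun i _ => ha_nonneg _] at hsum
    have hQx : ∀ i, Q i x = 0 := fun i => by
      by_contra h
      exact (ha_pd _ h).ne' (hsum i (Finset.mem_univ i))
    have hle : (⨆ i, N i) ≤ LinearMap.ker (innerₛₗ ℝ x) := iSup_le fun i v hv => by
      rw [LinearMap.mem_ker, innerₛₗ_apply_apply, ← hQ i x v hv, hQx i]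
      simp
    have hxx : x ∈ LinearMap.ker (innerₛₗ ℝ x) := hle (hN ▸ Submodule.mem_top)
    rw [LinearMap.mem_ker, innerₛₗ_apply_apply] at hxx
    exact inner_self_eq_zero.mp hxx
  let e := LinearEquiv.ofInjectiveEndo St inj
  have right_inv : ∀ x, St (e.symm x) = x := fun x => e.apply_symm_apply x
  refine ⟨e.symm, LinearMap.ext fun x => e.symm_apply_apply x, LinearMap.ext right_inv,
    fun lam => ⟨⟨fun i => Q i (e.symm lam), fun i => hQmem i _, ?_, ?_⟩, ?_⟩⟩
  · rw [← LinearMap.sum_apply, ← hSt, right_inv]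
  · rw [energy, right_inv]
    rfl
  · rintro s ⟨y, hy, hsum, rfl⟩
    change ⟪e.symm lam, lam⟫ ≤ _
    have hE := energy (e.symm lam)
    rw [right_inv] at hE
    have hcross : ∑ i, a (Q i (e.symm lam)) (y i) = ⟪e.symm lam, lam⟫ := by
      rw [Finset.sum_congr rfl fun i _ => hQ i _ _ (hy i), ← inner_sum, hsum]
    have hsq : 0 ≤ ∑ i, a (y i - Q i (e.symm lam)) (y i - Q i (e.symm lam)) :=
      Finset.sum_nonneg fun i _ => ha_nonneg _
    simp only [map_sub, LinearMap.sub_apply, Finset.sum_sub_distrib] at hsq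
    simp only [fun i => ha_symm (y i) (Q i (e.symm lam))] at hsq
    linarith
end
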